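/- Let R be a smooth function on a neighborhood of the origin in ℝ² with R(0,0) = 0 and nonvanishing Taylor series. Let (0,d) ∈ supp(R) and M₁ > 0 be such that a + M₁ b ≥ M₁ d for every (a,b) ∈ supp(R) (so (0,d) is the upper vertex, lying on the t₂-axis, of a compact edge of N(R) of slope −1/M₁). Then there exist N > 0 and a neighborhood U of the origin such that for all (x,y) ∈ U with N|x|^{M₁} < |y|, one has (1/2)|R_{0d}| |y|^d < |R(x,y)| < 2 |R_{0d}| |y|^d. -/

import Mathlib

open MeasureTheory Set Filter Topology

noncomputable section

/-- Iterated partial derivative `∂ₓᵃ ∂ᵧᵇ R` at `(x, y)`. -/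
def pderiv2 (R : ℝ → ℝ → ℝ) (a b : ℕ) (x y : ℝ) : ℝ :=
  iteratedDeriv a (fun x' => iteratedDeriv b (fun y' => R x' y') y) x

/-- Taylor coefficient `R_{ab} = ∂ₓᵃ ∂ᵧᵇ R(0,0) / (a! b!)`. -/
def tcoeff (R : ℝ → ℝ → ℝ) (a b : ℕ) : ℝ :=
  pderiv2 R a b 0 0 / (Nat.factorial a * Nat.factorial b)

/-- The support of the Taylor series of `R` at the origin. -/
def tsupp (R : ℝ → ℝ → ℝ) : Set (ℕ × ℕ) := {p | tcoeff R p.1 p.2 ≠ 0}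

/-- The Newton polygon of `R`. -/
def newtonPolygon (R : ℝ → ℝ → ℝ) : Set (ℝ × ℝ) :=
  convexHull ℝ (⋃ p ∈ tsupp R, {q : ℝ × ℝ | (p.1 : ℝ) ≤ q.1 ∧ (p.2 : ℝ) ≤ q.2})

/-- The Newton distance of `R`. -/
def newtonDist (R : ℝ → ℝ → ℝ) : ℝ := sInf {t : ℝ | (t, t) ∈ newtonPolygon R}

/-- `e` is a compact edge of `N(R)` of slope `-1/M` (with `M > 0`): it is the
(one-dimensional, compact) face of the Newton polygon cut out by a supporting line
`t₁ + M t₂ = c`. -/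
def IsCompactEdge (R : ℝ → ℝ → ℝ) (M : ℝ) (e : Set (ℝ × ℝ)) : Prop :=
  0 < M ∧ ∃ c : ℝ, (∀ q ∈ newtonPolygon R, c ≤ q.1 + M * q.2) ∧
    e = {q ∈ newtonPolygon R | q.1 + M * q.2 = c} ∧
    ∃ v w : ℝ × ℝ, v ≠ w ∧ e = segment ℝ v w

/-- The edge polynomial `R_e(x,y) = Σ_{(a,b) ∈ e ∩ supp R} R_{ab} x^a y^b`. -/
def edgePoly (R : ℝ → ℝ → ℝ) (e : Set (ℝ × ℝ)) (x y : ℝ) : ℝ :=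
  ∑' p : ℕ × ℕ,
    Set.indicator {p : ℕ × ℕ | ((p.1 : ℝ), (p.2 : ℝ)) ∈ e}
      (fun p => tcoeff R p.1 p.2 * x ^ p.1 * y ^ p.2) p

/-- `p` has a zero of order exactly `m` at `y₀`. -/
def ZeroOfOrder (p : ℝ → ℝ) (m : ℕ) (y₀ : ℝ) : Prop :=
  (∀ j < m, iteratedDeriv j p y₀ = 0) ∧ iteratedDeriv m p y₀ ≠ 0

/-- `R` is in nonadapted coordinates: the bisectrix meets the interior of a compact
edge `e` such that `R_e(1, ⬝)` has a real zero of order greater than `d(R)`. -/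
def IsNonadapted (R : ℝ → ℝ → ℝ) : Prop :=
  ∃ (M : ℝ) (e : Set (ℝ × ℝ)) (v w : ℝ × ℝ), IsCompactEdge R M e ∧ v ≠ w ∧
    e = segment ℝ v w ∧ (∃ t : ℝ, (t, t) ∈ openSegment ℝ v w) ∧
    ∃ (y₀ : ℝ) (m : ℕ), newtonDist R < (m : ℝ) ∧
      ZeroOfOrder (fun y => edgePoly R e 1 y) m y₀

/-- `R` is in generic adapted coordinates: adapted coordinates, every compact edge has slope
at least `-1`, and the Newton polygon meets the `t₂`-axis. -/
def GenericAdapted (R : ℝ → ℝ → ℝ) : Prop :=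
  ¬ IsNonadapted R ∧ (∀ M e, IsCompactEdge R M e → 1 ≤ M) ∧
    ∃ t : ℝ, ((0 : ℝ), t) ∈ newtonPolygon R

/-- `α_M(R) = min {a + M b : (a,b) ∈ supp R}`. -/
def alphaM (R : ℝ → ℝ → ℝ) (M : ℝ) : ℝ :=
  sInf {t : ℝ | ∃ p ∈ tsupp R, t = (p.1 : ℝ) + M * p.2}

/-- `R_M`, the sum of the terms of the Taylor series of `R` of minimal `M`-weighted degree. -/
def RMpart (R : ℝ → ℝ → ℝ) (M : ℝ) (x y : ℝ) : ℝ :=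
  ∑' p : ℕ × ℕ,
    Set.indicator {p : ℕ × ℕ | p ∈ tsupp R ∧ (p.1 : ℝ) + M * p.2 = alphaM R M}
      (fun p => tcoeff R p.1 p.2 * x ^ p.1 * y ^ p.2) p

/-- The Hessian determinant of `f`. -/
def hessDet (f : ℝ → ℝ → ℝ) (x y : ℝ) : ℝ :=
  pderiv2 f 2 0 x y * pderiv2 f 0 2 x y - (pderiv2 f 1 1 x y) ^ 2

/-- `F*(x,y) = (Σ_{(a,b) vertex of N(F)} x^{2a} y^{2b})^{1/2}`. -/
def vertexFn (F : ℝ → ℝ → ℝ) (x y : ℝ) : ℝ :=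
  Real.sqrt (∑' p : ℕ × ℕ,
    Set.indicator
      {p : ℕ × ℕ | ((p.1 : ℝ), (p.2 : ℝ)) ∈ (newtonPolygon F).extremePoints ℝ}
      (fun p => x ^ (2 * p.1) * y ^ (2 * p.2)) p)

/-! Expand `R` in powers of `y` with coefficients `g_b(x) = ∂_y^b R(x, 0) / b!`, up to an error
`o(y^d)` that is uniform in `x` because `∂_y^d R` is continuous. For `b < d` the hypothesis on the
support says that the derivatives of `g_b` of order less than `M (d - b)` vanish at `0`, so that
`g_b(x) y^b = O(x^a y^b)` with `a ≥ 1` and `a + M b ≥ M d`. Where `|x|^M = o(|y|)`, such a monomial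
is `o(|y|^{a / M + b})`, hence `o(|y|^d)`. -/

open Asymptotics
open scoped Nat

section Taylor

theorem exists_eq_taylor_add_lagrange_remainder {f : ℝ → ℝ} {n : ℕ} {x₀ x : ℝ}
    (hf : ∀ t ∈ uIcc x₀ x, ContDiffAt ℝ n f t) :
    ∃ ξ ∈ uIcc x₀ x, f x = ∑ k ∈ Finset.range n, iteratedDeriv k f x₀ / k ! * (x - x₀) ^ k +
      iteratedDeriv n f ξ / n ! * (x - x₀) ^ n := by
  rcases n with - | n
  · exact ⟨x, right_mem_uIcc, by simp⟩
  rcases eq_or_ne x₀ x with rfl | hx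
  · exact ⟨x₀, left_mem_uIcc, by simp [Finset.sum_range_succ']⟩
  obtain ⟨ξ, hξ, h⟩ := taylor_mean_remainder_lagrange_iteratedDeriv hx
    fun t ht => (hf t ht).contDiffWithinAt
  have hderiv : ∀ k ∈ Finset.range (n + 1),
      iteratedDerivWithin k f (uIcc x₀ x) x₀ = iteratedDeriv k f x₀ := fun k hk =>
    iteratedDerivWithin_eq_iteratedDeriv (uniqueDiffOn_uIcc hx)
      ((hf x₀ left_mem_uIcc).of_le (by exact_mod_cast (Finset.mem_range.1 hk).le)) left_mem_uIcc
  refine ⟨ξ, uIoo_subset_uIcc_self hξ, ?_⟩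
  rw [sub_eq_iff_eq_add', taylor_within_apply] at h
  rw [h]
  congr 1
  · refine Finset.sum_congr rfl fun k hk => ?_
    rw [hderiv k hk, smul_eq_mul]
    ring
  · ring

theorem eventually_nhds_prod_forall_uIcc {X : Type*} [TopologicalSpace X] {x₀ : X} {y₀ : ℝ}
    {P : X × ℝ → Prop} (hP : ∀ᶠ p in 𝓝 (x₀, y₀), P p) :
    ∀ᶠ p in 𝓝 (x₀, y₀), ∀ t ∈ uIcc y₀ p.2, P (p.1, t) := by
  rw [nhds_prod_eq] at hP ⊢
  obtain ⟨Q, hQ, S, hS, hQS⟩ := eventually_prod_iff.1 hP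
  have hS' : ∀ᶠ y in 𝓝 y₀, ∀ t ∈ uIcc y₀ y, S t :=
    (tendsto_const_nhds.uIcc tendsto_id).eventually (eventually_smallSets_forall.2 hS)
  filter_upwards [hQ.prod_mk hS'] with p hp t ht
  exact hQS hp.1 (hp.2 t ht)

theorem isLittleO_sub_taylor_of_continuousAt {X : Type*} [TopologicalSpace X] {f : X → ℝ → ℝ}
    {n : ℕ} {x₀ : X} {y₀ : ℝ} (hf : ∀ᶠ p in 𝓝 (x₀, y₀), ContDiffAt ℝ n (f p.1) p.2)
    (hcont : ContinuousAt (fun p : X × ℝ => iteratedDeriv n (f p.1) p.2) (x₀, y₀)) :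
    (fun p : X × ℝ => f p.1 p.2 -
        (∑ k ∈ Finset.range n, iteratedDeriv k (f p.1) y₀ / k ! * (p.2 - y₀) ^ k +
          iteratedDeriv n (f x₀) y₀ / n ! * (p.2 - y₀) ^ n))
      =o[𝓝 (x₀, y₀)] fun p => (p.2 - y₀) ^ n := by
  refine isLittleO_iff.2 fun ε hε => ?_
  have hclose : ∀ᶠ p in 𝓝 (x₀, y₀),
      dist (iteratedDeriv n (f p.1) p.2 / n !) (iteratedDeriv n (f x₀) y₀ / n !) < ε :=
    Metric.tendsto_nhds.1 (hcont.tendsto.div_const _) ε hε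
  filter_upwards [eventually_nhds_prod_forall_uIcc (hf.and hclose)] with p hp
  obtain ⟨ξ, hξ, htaylor⟩ :=
    exists_eq_taylor_add_lagrange_remainder fun t ht => (hp t ht).1
  rw [htaylor, add_sub_add_left_eq_sub, ← sub_mul, norm_mul]
  gcongr
  exact (hp ξ hξ).2.le

theorem isBigO_pow_of_iteratedDeriv_eq_zero {E : Type*} [NormedAddCommGroup E] [NormedSpace ℝ E]
    {f : ℝ → E} {n : ℕ} {x₀ : ℝ} (hf : ContDiffAt ℝ n f x₀)
    (hzero : ∀ k < n, iteratedDeriv k f x₀ = 0) :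
    f =O[𝓝 x₀] fun x => (x - x₀) ^ n := by
  obtain ⟨u, hu, hfu⟩ := hf.contDiffOn le_rfl (by simp)
  obtain ⟨ε, hε, hball⟩ := Metric.mem_nhds_iff.1 hu
  have hx₀ : x₀ ∈ Metric.ball x₀ ε := Metric.mem_ball_self hε
  have htaylor : ∀ x, taylorWithinEval f n (Metric.ball x₀ ε) x₀ x =
      ((n ! : ℝ)⁻¹ * (x - x₀) ^ n) • iteratedDeriv n f x₀ := fun x => by
    simp only [taylor_within_apply, iteratedDerivWithin_of_isOpen Metric.isOpen_ball hx₀]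
    rw [Finset.sum_range_succ, Finset.sum_eq_zero, zero_add]
    intro k hk
    rw [hzero k (Finset.mem_range.1 hk), smul_zero]
  have hrem := taylor_isLittleO (convex_ball x₀ ε) hx₀ (hfu.mono hball)
  simp only [htaylor, Metric.isOpen_ball.nhdsWithin_eq hx₀] at hrem
  have hmain : (fun x => ((n ! : ℝ)⁻¹ * (x - x₀) ^ n) • iteratedDeriv n f x₀)
      =O[𝓝 x₀] fun x => (x - x₀) ^ n :=
    isBigO_of_le' (c := ‖(n ! : ℝ)⁻¹‖ * ‖iteratedDeriv n f x₀‖) _ fun x => by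
      rw [norm_smul, norm_mul, mul_right_comm]
  simpa only [sub_add_cancel] using hrem.isBigO.add hmain

theorem contDiffAt_iteratedDeriv_snd {𝕜 E F : Type*} [NontriviallyNormedField 𝕜]
    [NormedAddCommGroup E] [NormedSpace 𝕜 E] [NormedAddCommGroup F] [NormedSpace 𝕜 F]
    {f : E → 𝕜 → F} {m n : WithTop ℕ∞} {b : ℕ} {p₀ : E × 𝕜}
    (hf : ContDiffAt 𝕜 n (fun p : E × 𝕜 => f p.1 p.2) p₀) (hmn : m + b ≤ n) :
    ContDiffAt 𝕜 m (fun p : E × 𝕜 => iteratedDeriv b (f p.1) p.2) p₀ := by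
  induction b generalizing m with
  | zero => simpa using hf.of_le (by simpa using hmn)
  | succ b ih =>
    have hb : ContDiffAt 𝕜 (m + 1) (fun p : E × 𝕜 => iteratedDeriv b (f p.1) p.2) p₀ :=
      ih (by rwa [Nat.cast_succ, add_comm (b : WithTop ℕ∞), ← add_assoc] at hmn)
    have hfderiv := ContDiffAt.fderiv (f := fun p : E × 𝕜 => iteratedDeriv b (f p.1))
      (g := Prod.snd) (x₀ := p₀)
      (hb.comp (p₀, p₀.2) ((contDiffAt_fst.fst).prodMk contDiffAt_snd)) contDiffAt_snd le_rfl
    simpa only [iteratedDeriv_succ, fderiv_apply_one_eq_deriv] using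
      hfderiv.clm_apply (contDiffAt_const (c := (1 : 𝕜)))

end Taylor

section NhdsAbovePow

/-- The filter of neighbourhoods of the origin intersected with the regions `N |x| ^ M < |y|`,
`N → ∞`. An estimate holds along it exactly when it holds on one such region near the origin, so
that the conclusions about `N` and a neighbourhood become statements with `=o`. -/
def nhdsAbovePow (M : ℝ) : Filter (ℝ × ℝ) :=
  𝓝 (0, 0) ⊓ ⨅ N : ℝ, 𝓟 {p | N * |p.1| ^ M < |p.2|}

variable {M : ℝ}

theorem eventually_nhdsAbovePow {P : ℝ × ℝ → Prop} :
    (∀ᶠ p in nhdsAbovePow M, P p) ↔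
      ∃ N > 0, ∀ᶠ p in 𝓝 ((0 : ℝ), (0 : ℝ)), N * |p.1| ^ M < |p.2| → P p := by
  have hanti : Antitone fun N : ℝ => {p : ℝ × ℝ | N * |p.1| ^ M < |p.2|} :=
    fun N N' hN p (hp : N' * |p.1| ^ M < |p.2|) => lt_of_le_of_lt (by gcongr) hp
  have hbasis := (𝓝 ((0 : ℝ), (0 : ℝ))).basis_sets.inf
    (hasBasis_iInf_principal hanti.directed_ge)
  rw [nhdsAbovePow, hbasis.eventually_iff]
  constructor
  · rintro ⟨⟨U, N⟩, ⟨hU, -⟩, h⟩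
    refine ⟨max N 1, by positivity, ?_⟩
    filter_upwards [hU] with p hpU hp
    exact h ⟨hpU, hanti (le_max_left N 1) hp⟩
  · rintro ⟨N, -, h⟩
    exact ⟨⟨_, N⟩, ⟨h, trivial⟩, fun p hp => hp.1 hp.2⟩

theorem nhdsAbovePow_le_nhds : nhdsAbovePow M ≤ 𝓝 (0, 0) := inf_le_left

theorem eventually_nhdsAbovePow_snd_ne_zero : ∀ᶠ p in nhdsAbovePow M, p.2 ≠ 0 :=
  eventually_nhdsAbovePow.2 ⟨1, one_pos, .of_forall fun p hp =>
    abs_pos.1 (lt_of_le_of_lt (by positivity) hp)⟩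

theorem isLittleO_abs_fst_rpow_abs_snd :
    (fun p : ℝ × ℝ => |p.1| ^ M) =o[nhdsAbovePow M] fun p => |p.2| := by
  refine isLittleO_iff.2 fun ε hε => eventually_nhdsAbovePow.2
    ⟨ε⁻¹, inv_pos.2 hε, .of_forall fun p hp => ?_⟩
  rw [Real.norm_of_nonneg (by positivity), norm_abs_eq_norm]
  exact ((inv_mul_lt_iff₀ hε).1 hp).le

theorem isLittleO_fst_pow_mul_snd_pow (hM : 0 < M) {a b d : ℕ} (ha : 0 < a)
    (hab : M * d ≤ a + M * b) :
    (fun p : ℝ × ℝ => p.1 ^ a * p.2 ^ b) =o[nhdsAbovePow M] fun p => p.2 ^ d := by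
  have hx : (fun p : ℝ × ℝ => p.1 ^ a) =o[nhdsAbovePow M] fun p => |p.2| ^ (a / M) := by
    have hpow := (isLittleO_abs_fst_rpow_abs_snd (M := M)).rpow (r := a / M) (by positivity)
      (.of_forall fun _ => abs_nonneg _)
    refine isLittleO_norm_left.1 (hpow.congr_left fun p => ?_)
    rw [← Real.rpow_mul (abs_nonneg _), mul_div_cancel₀ _ hM.ne', Real.rpow_natCast, norm_pow,
      Real.norm_eq_abs]
  refine (hx.mul_isBigO (isBigO_refl _ _)).trans_isBigO (.of_bound' ?_)
  have hsnd : ∀ᶠ p in nhdsAbovePow M, |p.2| ≤ 1 :=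
    nhdsAbovePow_le_nhds (continuous_snd.abs.continuousAt.eventually_le_const (by simp))
  filter_upwards [hsnd] with p hp
  have hexp : (d : ℝ) ≤ a / M + b := by
    rw [← mul_le_mul_iff_right₀ hM]
    field_simp
    linarith
  calc ‖|p.2| ^ (a / M) * p.2 ^ b‖ = |p.2| ^ (a / M + b) := by
        rw [norm_mul, Real.norm_of_nonneg (by positivity), norm_pow, Real.norm_eq_abs,
          Real.rpow_add_of_nonneg (abs_nonneg _) (by positivity) (by positivity),
          Real.rpow_natCast]
    _ ≤ |p.2| ^ (d : ℝ) :=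
        Real.rpow_le_rpow_of_exponent_ge' (abs_nonneg _) hp (by positivity) hexp
    _ = ‖p.2 ^ d‖ := by rw [Real.rpow_natCast, norm_pow, Real.norm_eq_abs]

end NhdsAbovePow

theorem eventually_norm_lt_of_isEquivalent {α E : Type*} [NormedAddCommGroup E] {l : Filter α}
    {u v : α → E} {κ K : ℝ} (huv : u ~[l] v) (hv : ∀ᶠ x in l, v x ≠ 0) (hκ : κ < 1)
    (hK : 1 < K) : ∀ᶠ x in l, κ * ‖v x‖ < ‖u x‖ ∧ ‖u x‖ < K * ‖v x‖ := by
  obtain ⟨ε, hε, hεmin⟩ := exists_between (lt_min (sub_pos.2 hκ) (sub_pos.2 hK))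
  obtain ⟨hεκ, hεK⟩ := lt_min_iff.1 hεmin
  filter_upwards [huv.isLittleO.def hε, hv] with x hx hvx
  have hpos : 0 < ‖v x‖ := norm_pos_iff.2 hvx
  have hdist := abs_le.1 ((abs_norm_sub_norm_le (u x) (v x)).trans hx)
  constructor <;> nlinarith

section Vertex

variable {R : ℝ → ℝ → ℝ} {n d : ℕ} {M : ℝ}

theorem tcoeff_zero_left (R : ℝ → ℝ → ℝ) (b : ℕ) :
    tcoeff R 0 b = iteratedDeriv b (R 0) 0 / b ! := by
  simp [tcoeff, pderiv2]

theorem iteratedDeriv_eq_zero_of_tcoeff_eq_zero {a b : ℕ} (h : tcoeff R a b = 0) :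
    iteratedDeriv a (fun x => iteratedDeriv b (R x) 0) 0 = 0 :=
  (div_eq_zero_iff.1 h).resolve_right (by positivity)

theorem isLittleO_iteratedDeriv_mul_pow_of_lt
    (hR : ContDiffAt ℝ n (fun p : ℝ × ℝ => R p.1 p.2) (0, 0)) (hdn : d ≤ n) (hM : 0 < M)
    (hMn : M * d ≤ n) (hlow : ∀ a b : ℕ, a + M * b < M * d → tcoeff R a b = 0) {b : ℕ}
    (hb : b < d) :
    (fun p : ℝ × ℝ => iteratedDeriv b (R p.1) 0 / b ! * p.2 ^ b)
      =o[nhdsAbovePow M] fun p => p.2 ^ d := by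
  have hbd : (b : ℝ) < d := by exact_mod_cast hb
  have hdn' : (d : ℝ) ≤ n := by exact_mod_cast hdn
  set a := ⌈M * (d - b)⌉₊
  have ha : 0 < a := Nat.ceil_pos.2 (mul_pos hM (sub_pos.2 hbd))
  have hab : M * d ≤ a + M * b := by linarith [Nat.le_ceil (M * ((d : ℝ) - b))]
  have habn : a + b ≤ n := by
    have hceil : a ≤ n - b := Nat.ceil_le.2 <| by
      rw [Nat.cast_sub (hb.le.trans hdn)]
      rcases le_total M 1 with hM_le_one | hM_ge_one <;> nlinarith
    omega
  have hsmooth : ContDiffAt ℝ a (fun x => iteratedDeriv b (R x) 0) 0 :=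
    (contDiffAt_iteratedDeriv_snd (m := a) (b := b) hR (by exact_mod_cast habn)).comp
      (f := fun x => (x, 0)) (0 : ℝ) (contDiffAt_id.prodMk contDiffAt_const)
  have hcoeff : (fun x => iteratedDeriv b (R x) 0) =O[𝓝 0] fun x => x ^ a := by
    simpa only [sub_zero] using isBigO_pow_of_iteratedDeriv_eq_zero hsmooth fun k hk =>
      iteratedDeriv_eq_zero_of_tcoeff_eq_zero (hlow k b (by linarith [Nat.lt_ceil.1 hk]))
  have hfst : Tendsto Prod.fst (nhdsAbovePow M) (𝓝 0) :=
    (continuous_fst.tendsto' (0, 0) 0 rfl).mono_left nhdsAbovePow_le_nhds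
  have hmonomial : (fun p : ℝ × ℝ => iteratedDeriv b (R p.1) 0 * p.2 ^ b)
      =O[nhdsAbovePow M] fun p => p.1 ^ a * p.2 ^ b :=
    (hcoeff.comp_tendsto hfst).mul (isBigO_refl _ _)
  simpa only [div_eq_inv_mul, mul_assoc] using
    (hmonomial.trans_isLittleO (isLittleO_fst_pow_mul_snd_pow hM ha hab)).const_mul_left (b ! : ℝ)⁻¹

theorem isLittleO_sub_vertex_monomial
    (hR : ContDiffAt ℝ n (fun p : ℝ × ℝ => R p.1 p.2) (0, 0)) (hdn : d ≤ n) (hM : 0 < M)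
    (hMn : M * d ≤ n) (hlow : ∀ a b : ℕ, a + M * b < M * d → tcoeff R a b = 0) :
    (fun p : ℝ × ℝ => R p.1 p.2 - tcoeff R 0 d * p.2 ^ d)
      =o[nhdsAbovePow M] fun p => p.2 ^ d := by
  have hRd : ContDiffAt ℝ d (fun p : ℝ × ℝ => R p.1 p.2) (0, 0) :=
    hR.of_le (by exact_mod_cast hdn)
  have hfiber : ∀ᶠ p in 𝓝 ((0 : ℝ), (0 : ℝ)), ContDiffAt ℝ d (R p.1) p.2 :=
    (hRd.eventually (by simp)).mono fun p hp =>
      hp.comp (f := fun y => (p.1, y)) p.2 (contDiffAt_const.prodMk contDiffAt_id)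
  have hcont : ContinuousAt (fun p : ℝ × ℝ => iteratedDeriv d (R p.1) p.2) (0, 0) :=
    (contDiffAt_iteratedDeriv_snd (m := 0) hRd (zero_add _).le).continuousAt
  have htaylor := (isLittleO_sub_taylor_of_continuousAt hfiber hcont).mono
    (nhdsAbovePow_le_nhds (M := M))
  have hlower := IsLittleO.fun_sum fun b hb => isLittleO_iteratedDeriv_mul_pow_of_lt hR hdn hM hMn
    hlow (Finset.mem_range.1 hb)
  simp only [sub_zero, ← tcoeff_zero_left] at htaylor
  exact (htaylor.add hlower).congr_left fun p => by ring

theorem stmt_3_general (hR : ContDiffAt ℝ n (fun p : ℝ × ℝ => R p.1 p.2) (0, 0)) (hdn : d ≤ n)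
    (hM : 0 < M) (hMn : M * d ≤ n) (hd : tcoeff R 0 d ≠ 0)
    (hlow : ∀ a b : ℕ, a + M * b < M * d → tcoeff R a b = 0) {κ K : ℝ} (hκ : κ < 1)
    (hK : 1 < K) :
    ∃ N > (0 : ℝ), ∃ U ∈ 𝓝 ((0 : ℝ), (0 : ℝ)), ∀ x y : ℝ, (x, y) ∈ U →
      N * |x| ^ M < |y| →
      κ * |tcoeff R 0 d| * |y| ^ d < |R x y| ∧ |R x y| < K * |tcoeff R 0 d| * |y| ^ d := by
  have hequiv : (fun p : ℝ × ℝ => R p.1 p.2) ~[nhdsAbovePow M]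
      fun p => tcoeff R 0 d * p.2 ^ d :=
    (isLittleO_sub_vertex_monomial hR hdn hM hMn hlow).const_mul_right hd
  have hne : ∀ᶠ p in nhdsAbovePow M, tcoeff R 0 d * p.2 ^ d ≠ 0 :=
    eventually_nhdsAbovePow_snd_ne_zero.mono fun p hp => mul_ne_zero hd (pow_ne_zero d hp)
  obtain ⟨N, hN, hU⟩ :=
    eventually_nhdsAbovePow.1 (eventually_norm_lt_of_isEquivalent hequiv hne hκ hK)
  refine ⟨N, hN, _, hU, fun x y hxy hNxy => ?_⟩
  simpa only [norm_mul, norm_pow, Real.norm_eq_abs, ← mul_assoc] using hxy hNxy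

end Vertex

/-- Lemma 2.2 (vertex on the `t₂`-axis): near the origin, in the region
`N|x|^{M₁} < |y|`, `R` is comparable to its vertex monomial `R_{0d} y^d`. -/
theorem stmt_3 (R : ℝ → ℝ → ℝ) (U₀ : Set (ℝ × ℝ)) (hU₀ : U₀ ∈ 𝓝 ((0 : ℝ), (0 : ℝ)))
    (hsm : ContDiffOn ℝ (⊤ : ℕ∞) (fun p : ℝ × ℝ => R p.1 p.2) U₀)
    (h0 : R 0 0 = 0) (hts : (tsupp R).Nonempty)
    (d : ℕ) (hd : ((0 : ℕ), d) ∈ tsupp R) (M₁ : ℝ) (hM₁ : 0 < M₁)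
    (h₁ : ∀ p ∈ tsupp R, M₁ * d ≤ (p.1 : ℝ) + M₁ * p.2) :
    ∃ N > (0 : ℝ), ∃ U ∈ 𝓝 ((0 : ℝ), (0 : ℝ)), ∀ x y : ℝ, (x, y) ∈ U →
      N * |x| ^ M₁ < |y| →
      (1 / 2) * |tcoeff R 0 d| * |y| ^ d < |R x y| ∧
        |R x y| < 2 * |tcoeff R 0 d| * |y| ^ d := by
  obtain ⟨n, hn⟩ := exists_nat_ge (max (d : ℝ) (M₁ * d))
  have hR : ContDiffAt ℝ n (fun p : ℝ × ℝ => R p.1 p.2) (0, 0) :=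
    (hsm.contDiffAt hU₀).of_le (by exact_mod_cast le_top)
  exact stmt_3_general hR (by exact_mod_cast (le_max_left _ _).trans hn) hM₁
    ((le_max_right _ _).trans hn) hd
    (fun a b hab => by_contra fun hne => hab.not_ge (h₁ (a, b) hne)) (by norm_num) (by norm_num)

end
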